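/- (Lemma D.2, robustness of the empirical risk minimizer) Let F be a class of functions from X to the finite label set Y, fix a training set (x_1,y_1),...,(x_n,y_n) ∈ (X×Y)^n, and let α = min_{g∈F} (1/n)·#{i : g(x_i) ≠ y_i}. Let Ỹ be the η-noisy labels, and let f̃ be any function achieving the minimum of #{i : g(x_i) ≠ Ỹ_i} over g ∈ F. Then E[(1/n)·#{i : f̃(x_i) = y_i}] ≥ (1 − α) − 2η, where the expectation is over the noise; that is, the robustness gap of the empirical risk minimization training procedure is at most 2η. -/

import Mathlib

/-! The proof compares, for each noise outcome `N`, the number of mistakes against the clean labels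
with the number of mistakes against the noisy labels. The two label vectors differ only where
`N i ≠ none`, so these counts differ by at most `D = #{i : N i ≠ none}` for any classifier
(`card_mistakes_le`). Passing from the clean to the noisy labels for an optimal clean classifier
`g`, and back for the noisy minimizer, costs `D` each time, so the minimizer makes at most
`n α + 2 D` clean mistakes. Each coordinate of the noise differs from `none` with probability `η`,
so `D` has mean `n η`, and integrating gives the bound. -/

open MeasureTheory
open scoped ENNReal

instance (priority := 100) optionMeasurableSpace {α : Type*} : MeasurableSpace (Option α) := ⊤

/-- Distribution of a single noise coordinate: with probability `1 - η` the label is kept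
(`none`), and with probability `η` it is replaced by a uniform label (`some b`, each with
probability `η/k`). -/
noncomputable def noiseMeasure (k : ℕ) (η : ℝ) : Measure (Option (Fin k)) :=
  ENNReal.ofReal (1 - η) • Measure.dirac none +
    ∑ b : Fin k, ENNReal.ofReal (η / k) • Measure.dirac (some b)

/-- The joint distribution of the `n` independent noise coordinates. -/
noncomputable def noisePi (n k : ℕ) (η : ℝ) : Measure (Fin n → Option (Fin k)) :=
  Measure.pi fun _ => noiseMeasure k η

instance noise_discreteMeasurableSpace {k : ℕ} : DiscreteMeasurableSpace (Option (Fin k)) :=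
  ⟨fun _ => trivial⟩

lemma noiseMeasure_isProbabilityMeasure {k : ℕ} (hk : 2 ≤ k) {η : ℝ} (hη0 : 0 < η)
    (hη1 : η < 1) : IsProbabilityMeasure (noiseMeasure k η) := by
  have hk0 : (k : ℝ) ≠ 0 := by positivity
  constructor
  simp only [noiseMeasure, Measure.add_apply, Measure.smul_apply, Measure.finsetSum_apply,
    measure_univ, smul_eq_mul, mul_one, Finset.sum_const, Finset.card_univ, Fintype.card_fin,
    nsmul_eq_mul]
  rw [← ENNReal.ofReal_natCast, ← ENNReal.ofReal_mul (by positivity),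
    ← ENNReal.ofReal_add (by linarith) (by positivity), mul_div_cancel₀ _ hk0]
  simp

lemma noiseMeasure_real_none {k : ℕ} {η : ℝ} (hη1 : η < 1) :
    (noiseMeasure k η).real {none} = 1 - η := by
  simp [noiseMeasure, Measure.real, hη1.le]

/-- A coordinate of the noise differs from `none` with probability `η`. -/
lemma integral_noise_indicator {n k : ℕ} (hk : 2 ≤ k) {η : ℝ} (hη0 : 0 < η) (hη1 : η < 1)
    (i : Fin n) : ∫ N, (if N i ≠ none then (1 : ℝ) else 0) ∂(noisePi n k η) = η := by
  have := noiseMeasure_isProbabilityMeasure hk hη0 hη1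
  have hmp := measurePreserving_eval (fun _ : Fin n => noiseMeasure k η) i
  have h := integral_map (μ := noisePi n k η) hmp.measurable.aemeasurable
    (f := fun o : Option (Fin k) => if o ≠ none then (1 : ℝ) else 0)
    (Measurable.of_discrete.aestronglyMeasurable)
  refine h.symm.trans ?_
  rw [noisePi, hmp.map_eq]
  have h3 : (fun o : Option (Fin k) => if o ≠ none then (1 : ℝ) else 0)
      = ({none}ᶜ : Set (Option (Fin k))).indicator 1 := by
    ext o
    by_cases ho : o = none <;> simp [ho]
  rw [h3, integral_indicator_one (.of_discrete),
    probReal_compl_eq_one_sub (.of_discrete), noiseMeasure_real_none hη1]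
  ring

/-- Changing the labels from `b` to `a` creates at most one new mistake per changed label. -/
lemma card_mistakes_le {n k : ℕ} (f a b : Fin n → Fin k) (P : Fin n → Prop)
    (h : ∀ i, ¬ P i → a i = b i) :
    Nat.card {i // f i ≠ a i} ≤ Nat.card {i // f i ≠ b i} + Nat.card {i // P i} := by
  classical
  simp only [Nat.card_eq_fintype_card, Fintype.card_subtype]
  refine (Finset.card_le_card ?_).trans (Finset.card_union_le _ _)
  intro i
  simp only [Finset.mem_filter, Finset.mem_univ, true_and, Finset.mem_union]
  intro hi
  by_cases hP : P i
  · exact Or.inr hP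
  · exact Or.inl (h i hP ▸ hi)

/-- Lemma D.2 (robustness of the empirical risk minimizer).  Let `F` be a class of
functions `X → Fin k`, fix a training set `(x_i, y_i)_{i<n}`, and let `α` be the minimum
over `g ∈ F` of the fraction of training mistakes of `g` against the clean labels.  If,
for every noise outcome `N`, `f̃ N ∈ F` minimizes over `F` the number of mistakes against
the `η`-noisy labels `(N i).getD (y i)`, then the expected fraction of training points on
which `f̃` agrees with the original labels is at least `(1 − α) − 2η`; that is, the
robustness gap of empirical risk minimization is at most `2η`. -/
theorem erm_robustness {X : Type*} {k n : ℕ} (hk : 2 ≤ k) (hn : 0 < n)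
    {η : ℝ} (hη0 : 0 < η) (hη1 : η < 1)
    (F : Set (X → Fin k)) (x : Fin n → X) (y : Fin n → Fin k) (α : ℝ)
    (hα : IsLeast ((fun g => (Nat.card {i : Fin n // g (x i) ≠ y i} : ℝ) / n) '' F) α)
    (ftil : (Fin n → Option (Fin k)) → X → Fin k)
    (hmem : ∀ N, ftil N ∈ F)
    (hmin : ∀ (N : Fin n → Option (Fin k)), ∀ g ∈ F,
      Nat.card {i : Fin n // ftil N (x i) ≠ (N i).getD (y i)} ≤
        Nat.card {i : Fin n // g (x i) ≠ (N i).getD (y i)}) :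
    (1 - α) - 2 * η ≤
      ∫ N, ((Nat.card {i : Fin n // ftil N (x i) = y i} : ℝ) / n) ∂(noisePi n k η) := by
  have := noiseMeasure_isProbabilityMeasure hk hη0 hη1
  have hprob : IsProbabilityMeasure (noisePi n k η) := by
    unfold noisePi
    infer_instance
  have hn' : (0 : ℝ) < n := by exact_mod_cast hn
  obtain ⟨⟨g, hgF, hgα⟩, -⟩ := hα
  have hgα' : (Nat.card {i : Fin n // g (x i) ≠ y i} : ℝ) = α * n := by
    rw [← hgα]
    field_simp
  have hpt : ∀ N : Fin n → Option (Fin k),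
      (1 - α) - 2 / n * ∑ i, (if N i ≠ none then (1 : ℝ) else 0)
        ≤ (Nat.card {i : Fin n // ftil N (x i) = y i} : ℝ) / n := by
    intro N
    have h1 := card_mistakes_le (fun i => ftil N (x i)) y (fun i => (N i).getD (y i))
      (fun i => N i ≠ none) (by intro i hi; simp [not_not.mp hi])
    have h2 := card_mistakes_le (fun i => g (x i)) (fun i => (N i).getD (y i)) y
      (fun i => N i ≠ none) (by intro i hi; simp [not_not.mp hi])
    have h3 := hmin N g hgF
    have hD : ∑ i, (if N i ≠ none then (1 : ℝ) else 0) = Nat.card {i // N i ≠ none} := by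
      rw [Finset.sum_boole, Nat.card_eq_fintype_card, Fintype.card_subtype]
    have hc : Nat.card {i : Fin n // ftil N (x i) = y i}
        + Nat.card {i : Fin n // ftil N (x i) ≠ y i} = n := by
      simp only [Nat.card_eq_fintype_card, Fintype.card_subtype]
      rw [Finset.card_filter_add_card_filter_not]
      simp
    have h4 : Nat.card {i : Fin n // ftil N (x i) ≠ y i}
        ≤ Nat.card {i : Fin n // g (x i) ≠ y i} + 2 * Nat.card {i // N i ≠ none} := by
      omega
    have h5 := (Nat.cast_le (α := ℝ)).mpr h4
    rw [Nat.cast_add, Nat.cast_mul, Nat.cast_ofNat] at h5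
    have hc' : (Nat.card {i : Fin n // ftil N (x i) = y i} : ℝ)
        + Nat.card {i : Fin n // ftil N (x i) ≠ y i} = n := by exact_mod_cast hc
    rw [hD, le_div_iff₀ hn', sub_mul, mul_right_comm, div_mul_cancel₀ _ hn'.ne']
    linarith
  calc (1 - α) - 2 * η
      = ∫ N, ((1 - α) - 2 / n * ∑ i, (if N i ≠ none then (1 : ℝ) else 0)) ∂(noisePi n k η) := by
        rw [integral_sub (.of_finite) (.of_finite), integral_const_mul,
          integral_finsetSum _ (fun _ _ => .of_finite)]
        simp only [integral_noise_indicator hk hη0 hη1]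
        simp
        field_simp
    _ ≤ _ := integral_mono (.of_finite) (.of_finite) hpt
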